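/- Fix an integer d ≥ 1, p ∈ (1,∞), δ ≥ 0, and let (μ_t)_{t≥0} be a convolution semigroup in 𝒫_p(ℝ^d) with 𝒲_p(μ_t, δ_0) → 0 as t ↓ 0. Then for every t ≥ 0 and every f ∈ C₀(ℝ^d), the decreasing pointwise limit 𝒮(t)f := lim_{n→∞} 𝒮^n(t)f exists, 𝒮(t) maps C₀(ℝ^d) to itself, 𝒮(t)∘𝒮(s) = 𝒮(t+s) for all s,t ≥ 0, and for every x ∈ ℝ^d the functional f ↦ 𝒮(t)f(x) is sublinear (𝒮(t)(f+g) ≤ 𝒮(t)f + 𝒮(t)g and 𝒮(t)(λf) = λ·𝒮(t)f for all λ ≥ 0), increasing (f ≤ g implies 𝒮(t)f ≤ 𝒮(t)g), maps the zero function to zero, and 𝒮(t) is contractive: ‖𝒮(t)f − 𝒮(t)g‖_∞ ≤ ‖f − g‖_∞ for all f, g ∈ C₀(ℝ^d). -/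

import Mathlib

open MeasureTheory Filter Topology ENNReal NNReal Set ZeroAtInfty
noncomputable section

/-- Euclidean space ℝ^d. -/
abbrev Ed (d : ℕ) := EuclideanSpace ℝ (Fin d)

/-- `𝒫_p(ℝ^d)`: Borel probability measures with finite `p`-th moment. -/
def MemPp {d : ℕ} (p : ℝ) (μ : Measure (Ed d)) : Prop :=
  IsProbabilityMeasure μ ∧ ∫⁻ x, (‖x‖₊ : ℝ≥0∞) ^ p ∂μ < ∞

/-- `γ` is a coupling of `μ` and `ν`. -/
def IsCoupling {d : ℕ} (γ : Measure (Ed d × Ed d)) (μ ν : Measure (Ed d)) : Prop :=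
  γ.map Prod.fst = μ ∧ γ.map Prod.snd = ν

/-- The `p`-Wasserstein distance `𝒲_p(μ, ν)`. -/
def Wp {d : ℕ} (p : ℝ) (μ ν : Measure (Ed d)) : ℝ :=
  (⨅ γ ∈ {γ : Measure (Ed d × Ed d) | IsCoupling γ μ ν},
    (∫⁻ q, (‖q.2 - q.1‖₊ : ℝ≥0∞) ^ p ∂γ) ^ (1 / p)).toReal

/-- The scaled penalty `φ_t(r) = t·φ(r/t)` for `t > 0`; `φ_0(0) = 0`, `φ_0(r) = ∞` for `r > 0`. -/
def phit (φ : ℝ≥0 → ℝ≥0∞) (t : ℝ) (r : ℝ≥0) : ℝ≥0∞ :=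
  if 0 < t then (t.toNNReal : ℝ≥0∞) * φ (r / t.toNNReal) else (if r = 0 then 0 else ∞)

/-- `φ` is a penalty function: lower semicontinuous, convex, increasing, not constant,
`φ(0) = 0`, and `x ↦ φ(x^{1/p})` is convex. -/
structure IsPenalty (p : ℝ) (φ : ℝ≥0 → ℝ≥0∞) : Prop where
  lsc : LowerSemicontinuous φ
  convex : ∀ a b l m : ℝ≥0, l + m = 1 →
    φ (l * a + m * b) ≤ (l : ℝ≥0∞) * φ a + (m : ℝ≥0∞) * φ b
  mono : Monotone φ
  not_const : ∃ a b, φ a ≠ φ b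
  map_zero : φ 0 = 0
  convex_rpow : ∀ a b l m : ℝ≥0, l + m = 1 →
    φ ((l * a + m * b) ^ (1 / p)) ≤ (l : ℝ≥0∞) * φ (a ^ (1 / p)) + (m : ℝ≥0∞) * φ (b ^ (1 / p))

/-- The convex conjugate `φ*(y) = sup_{x ≥ 0} (xy − φ(x))`. -/
def phiStar (φ : ℝ≥0 → ℝ≥0∞) (y : ℝ≥0) : ℝ≥0∞ :=
  ⨆ x : ℝ≥0, ((x * y : ℝ≥0) : ℝ≥0∞) - φ x

/-- The one-step operator `S(t)f(x) = sup_ν ( ∫ f(x+y) ν(dy) − φ_t(𝒲_p(μ_t, ν)) )`. -/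
def Sop {d : ℕ} (p : ℝ) (φ : ℝ≥0 → ℝ≥0∞) (μt : Measure (Ed d)) (t : ℝ)
    (f : Ed d → ℝ) (x : Ed d) : ℝ :=
  sSup { r : ℝ | ∃ ν : Measure (Ed d), MemPp p ν ∧ ∃ c : ℝ, 0 ≤ c ∧
    phit φ t (Wp p μt ν).toNNReal ≤ ENNReal.ofReal c ∧ r = (∫ y, f (x + y) ∂ν) - c }

/-- The iterated operator `𝒮ⁿ(t) = S(2⁻ⁿ)^{∘ k} ∘ S(t − k·2⁻ⁿ)`, `k = ⌊2ⁿ t⌋`. -/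
def SiterN {d : ℕ} (p : ℝ) (φ : ℝ≥0 → ℝ≥0∞) (μ : ℝ → Measure (Ed d)) (n : ℕ) (t : ℝ)
    (f : Ed d → ℝ) : Ed d → ℝ :=
  (fun g => Sop p φ (μ ((2 : ℝ) ^ n)⁻¹) ((2 : ℝ) ^ n)⁻¹ g)^[⌊(2:ℝ)^n * t⌋₊]
    (Sop p φ (μ (t - ⌊(2:ℝ)^n * t⌋₊ * ((2:ℝ)^n)⁻¹)) (t - ⌊(2:ℝ)^n * t⌋₊ * ((2:ℝ)^n)⁻¹) f)

/-- The limiting operator `𝒮(t)f = lim_n 𝒮ⁿ(t)f` (a decreasing limit, i.e. an infimum). -/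
def Slim {d : ℕ} (p : ℝ) (φ : ℝ≥0 → ℝ≥0∞) (μ : ℝ → Measure (Ed d)) (t : ℝ)
    (f : Ed d → ℝ) (x : Ed d) : ℝ :=
  ⨅ n : ℕ, SiterN p φ μ n t f x

/-- `f ∈ C₀(ℝ^d)`: continuous and vanishing at infinity. -/
def IsC0 {d : ℕ} (f : Ed d → ℝ) : Prop :=
  Continuous f ∧ Tendsto f (cocompact (Ed d)) (𝓝 0)

/-- `(μ_t)_{t ≥ 0}` is a convolution semigroup in `𝒫_p(ℝ^d)`. -/
def IsConvSemigroup {d : ℕ} (p : ℝ) (μ : ℝ → Measure (Ed d)) : Prop :=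
  μ 0 = Measure.dirac 0 ∧ (∀ s t : ℝ, 0 ≤ s → 0 ≤ t → μ (s + t) = (μ s).conv (μ t)) ∧
    ∀ t : ℝ, 0 ≤ t → MemPp p (μ t)

/-- `𝒲_p(μ_t, δ_0) → 0` as `t ↓ 0`. -/
def WContinuousAtZero {d : ℕ} (p : ℝ) (μ : ℝ → Measure (Ed d)) : Prop :=
  Tendsto (fun t => Wp p (μ t) (Measure.dirac 0)) (𝓝[>] (0:ℝ)) (𝓝 0)

/-- The semigroup of the underlying Lévy process, `S^μ(t)f(x) = ∫ f(x+y) μ_t(dy)`. -/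
def Smu {d : ℕ} (μ : ℝ → Measure (Ed d)) (t : ℝ) (f : Ed d → ℝ) (x : Ed d) : ℝ :=
  ∫ y, f (x + y) ∂(μ t)

/-- `f ∈ D(A^μ)` with `A^μ f = Af`: `(S^μ(t)f − f)/t → Af` uniformly as `t ↓ 0`. -/
def HasGenerator {d : ℕ} (μ : ℝ → Measure (Ed d)) (f Af : Ed d → ℝ) : Prop :=
  TendstoUniformly (fun t x => (Smu μ t f x - f x) / t) Af (𝓝[>] (0:ℝ))

/-- `f ∈ C₀¹(ℝ^d)`: continuously differentiable, vanishing at infinity, with gradient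
vanishing at infinity. -/
def IsC01 {d : ℕ} (f : Ed d → ℝ) : Prop :=
  IsC0 f ∧ ContDiff ℝ 1 f ∧ Tendsto (fun x => gradient f x) (cocompact (Ed d)) (𝓝 0)


/-- The one-step operator with Wasserstein-ball constraint:
`S(t)f(x) = sup { ∫ f(x+y) ν(dy) : ν ∈ 𝒫_p(ℝ^d), 𝒲_p(μ_t, ν) ≤ δ·t }`. -/
def SopD {d : ℕ} (p δ : ℝ) (μt : Measure (Ed d)) (t : ℝ) (f : Ed d → ℝ) (x : Ed d) : ℝ :=
  sSup { r : ℝ | ∃ ν : Measure (Ed d), MemPp p ν ∧ Wp p μt ν ≤ δ * t ∧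
    r = ∫ y, f (x + y) ∂ν }

/-- The iterated operator `𝒮ⁿ(t) = S(2⁻ⁿ)^{∘ k} ∘ S(t − k·2⁻ⁿ)`, `k = ⌊2ⁿ t⌋`. -/
def SiterND {d : ℕ} (p δ : ℝ) (μ : ℝ → Measure (Ed d)) (n : ℕ) (t : ℝ)
    (f : Ed d → ℝ) : Ed d → ℝ :=
  (fun g => SopD p δ (μ ((2 : ℝ) ^ n)⁻¹) ((2 : ℝ) ^ n)⁻¹ g)^[⌊(2:ℝ)^n * t⌋₊]
    (SopD p δ (μ (t - ⌊(2:ℝ)^n * t⌋₊ * ((2:ℝ)^n)⁻¹)) (t - ⌊(2:ℝ)^n * t⌋₊ * ((2:ℝ)^n)⁻¹) f)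

/-- The limiting operator `𝒮(t)f = lim_n 𝒮ⁿ(t)f` (a decreasing limit, i.e. an infimum). -/
def SlimD {d : ℕ} (p δ : ℝ) (μ : ℝ → Measure (Ed d)) (t : ℝ)
    (f : Ed d → ℝ) (x : Ed d) : ℝ :=
  ⨅ n : ℕ, SiterND p δ μ n t f x


/-! ### Basic facts on `C₀` functions -/

lemma IsC0.bdd {d : ℕ} {f : Ed d → ℝ} (hf : IsC0 f) : ∃ M : ℝ, 0 ≤ M ∧ ∀ x, |f x| ≤ M := by
  let F : C₀(Ed d, ℝ) := ⟨⟨f, hf.1⟩, hf.2⟩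
  refine ⟨‖F.toBCF‖, norm_nonneg _, fun x => ?_⟩
  exact F.toBCF.norm_coe_le_norm x

lemma IsC0.uc {d : ℕ} {f : Ed d → ℝ} (hf : IsC0 f) : UniformContinuous f := by
  let F : C₀(Ed d, ℝ) := ⟨⟨f, hf.1⟩, hf.2⟩
  exact ZeroAtInftyContinuousMap.uniformContinuous F

lemma isC0_coe {d : ℕ} (f : C₀(Ed d, ℝ)) : IsC0 (⇑f) := ⟨f.continuous, zero_at_infty f⟩

lemma IsC0.add {d : ℕ} {f g : Ed d → ℝ} (hf : IsC0 f) (hg : IsC0 g) :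
    IsC0 (fun x => f x + g x) :=
  ⟨hf.1.add hg.1, by simpa using hf.2.add hg.2⟩

lemma IsC0.smul {d : ℕ} {f : Ed d → ℝ} (hf : IsC0 f) (l : ℝ) :
    IsC0 (fun x => l * f x) :=
  ⟨continuous_const.mul hf.1, by simpa using hf.2.const_mul l⟩

lemma IsC0.est {d : ℕ} {f : Ed d → ℝ} (hf : IsC0 f) {ε : ℝ} (hε : 0 < ε) :
    ∃ C : ℝ, 0 ≤ C ∧ ∀ a b, |f a - f b| ≤ ε + C * ‖a - b‖ := by
  obtain ⟨M, hM0, hM⟩ := hf.bdd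
  obtain ⟨θ, hθ, h⟩ := Metric.uniformContinuous_iff.1 hf.uc ε hε
  refine ⟨2 * M / θ, by positivity, fun a b => ?_⟩
  by_cases hab : dist a b < θ
  · have := h hab
    rw [Real.dist_eq] at this
    have h2 : 0 ≤ 2 * M / θ * ‖a - b‖ := by positivity
    linarith
  · rw [not_lt, dist_eq_norm] at hab
    have h1 : |f a - f b| ≤ 2 * M := by
      have := abs_sub (f a) (f b)
      linarith [hM a, hM b]
    have h2 : 2 * M ≤ 2 * M / θ * ‖a - b‖ := by
      rw [div_mul_eq_mul_div, le_div_iff₀ hθ]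
      exact mul_le_mul_of_nonneg_left hab (by positivity)
    linarith

lemma IsC0.integrable {d : ℕ} {f : Ed d → ℝ} (hf : IsC0 f) {Ω : Type*} [MeasurableSpace Ω]
    (γ : Measure Ω) [IsProbabilityMeasure γ] {h : Ω → Ed d} (hh : Measurable h) :
    Integrable (fun ω => f (h ω)) γ := by
  obtain ⟨M, hM0, hM⟩ := hf.bdd
  exact Integrable.of_bound (hf.1.measurable.comp hh).aestronglyMeasurable M
    (Eventually.of_forall fun ω => hM _)

/-- bounds of the first moment by the `p`-th one -/
lemma mean_le {d : ℕ} {p : ℝ} (hp : 1 < p) {Ω : Type*} [MeasurableSpace Ω]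
    (γ : Measure Ω) [IsProbabilityMeasure γ] {D : Ω → Ed d} (hD : Measurable D) {r : ℝ}
    (hr : 0 ≤ r) (h : eLpNorm D (ENNReal.ofReal p) γ ≤ ENNReal.ofReal r) :
    Integrable D γ ∧ ∫ ω, ‖D ω‖ ∂γ ≤ r := by
  have h1 : eLpNorm D 1 γ ≤ ENNReal.ofReal r := by
    refine le_trans (eLpNorm_le_eLpNorm_of_exponent_le ?_ hD.aestronglyMeasurable) h
    rw [← ENNReal.ofReal_one]
    exact ENNReal.ofReal_le_ofReal hp.le
  have h2 : Integrable D γ :=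
    memLp_one_iff_integrable.1 ⟨hD.aestronglyMeasurable, h1.trans_lt ENNReal.ofReal_lt_top⟩
  refine ⟨h2, ?_⟩
  rw [integral_norm_eq_lintegral_enorm hD.aestronglyMeasurable, ← eLpNorm_one_eq_lintegral_enorm]
  exact ENNReal.toReal_le_of_le_ofReal hr h1

lemma cost_eq {d : ℕ} {p : ℝ} (hp : 1 < p) {Ω : Type*} [MeasurableSpace Ω]
    (γ : Measure Ω) (D : Ω → Ed d) :
    (∫⁻ q, (‖D q‖₊ : ℝ≥0∞) ^ p ∂γ) ^ (1 / p) = eLpNorm D (ENNReal.ofReal p) γ := by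
  rw [eLpNorm_eq_lintegral_rpow_enorm_toReal (by simp; linarith) (by simp)]
  rw [ENNReal.toReal_ofReal (by linarith)]
  rfl

lemma moment_iff {d : ℕ} {p : ℝ} (hp : 1 < p) {Ω : Type*} [MeasurableSpace Ω]
    (γ : Measure Ω) (D : Ω → Ed d) :
    ∫⁻ q, (‖D q‖₊ : ℝ≥0∞) ^ p ∂γ < ∞ ↔ eLpNorm D (ENNReal.ofReal p) γ < ∞ := by
  rw [← cost_eq hp, ENNReal.rpow_lt_top_iff_of_pos (by positivity)]

lemma Wp_eq {d : ℕ} {p : ℝ} (hp : 1 < p) (μ ν : Measure (Ed d)) :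
    Wp p μ ν = (⨅ γ ∈ {γ : Measure (Ed d × Ed d) | IsCoupling γ μ ν},
      eLpNorm (fun q : Ed d × Ed d => q.2 - q.1) (ENNReal.ofReal p) γ).toReal := by
  unfold Wp
  simp_rw [← cost_eq hp]

lemma MemPp.eLp {d : ℕ} {p : ℝ} (hp : 1 < p) {μ : Measure (Ed d)} (h : MemPp p μ) :
    eLpNorm (fun x : Ed d => x) (ENNReal.ofReal p) μ < ∞ := (moment_iff hp μ _).1 h.2

lemma one_le_ofReal {p : ℝ} (hp : 1 < p) : 1 ≤ ENNReal.ofReal p := by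
  rw [← ENNReal.ofReal_one]
  exact ENNReal.ofReal_le_ofReal hp.le

/-- near optimal couplings -/
lemma exists_coupling {d : ℕ} {p : ℝ} (hp : 1 < p) {μ ν : Measure (Ed d)} (hμ : MemPp p μ)
    (hν : MemPp p ν) {r : ℝ} (hr : Wp p μ ν < r) :
    ∃ γ : Measure (Ed d × Ed d), IsProbabilityMeasure γ ∧ IsCoupling γ μ ν ∧
      eLpNorm (fun q : Ed d × Ed d => q.2 - q.1) (ENNReal.ofReal p) γ ≤ ENNReal.ofReal r := by
  have := hμ.1
  have := hν.1
  rw [Wp_eq hp] at hr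
  have hfin : (⨅ γ ∈ {γ : Measure (Ed d × Ed d) | IsCoupling γ μ ν},
      eLpNorm (fun q : Ed d × Ed d => q.2 - q.1) (ENNReal.ofReal p) γ) ≠ ∞ := by
    have hc : IsCoupling (μ.prod ν) μ ν := by
      constructor
      · simp [Measure.map_fst_prod]
      · simp [Measure.map_snd_prod]
    refine ne_top_of_le_ne_top ?_ (iInf₂_le (μ.prod ν) hc)
    refine ne_top_of_le_ne_top ?_ (eLpNorm_sub_le (by fun_prop) (by fun_prop) (one_le_ofReal hp))
    have h1 := eLpNorm_map_measure (μ := μ.prod ν) (f := Prod.fst) (p := ENNReal.ofReal p)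
      (g := fun x : Ed d => x) (by fun_prop) (by fun_prop)
    have h2 := eLpNorm_map_measure (μ := μ.prod ν) (f := Prod.snd) (p := ENNReal.ofReal p)
      (g := fun x : Ed d => x) (by fun_prop) (by fun_prop)
    rw [hc.1] at h1
    rw [hc.2] at h2
    have e1 := hμ.eLp hp
    have e2 := hν.eLp hp
    rw [h1] at e1
    rw [h2] at e2
    exact (ENNReal.add_lt_top.2 ⟨e2, e1⟩).ne
  rw [← ENNReal.lt_ofReal_iff_toReal_lt hfin] at hr
  simp only [iInf_lt_iff] at hr
  obtain ⟨γ, hγ, h⟩ := hr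
  refine ⟨γ, ?_, hγ, h.le⟩
  have : IsProbabilityMeasure (γ.map Prod.fst) := by rw [hγ.1]; infer_instance
  exact Measure.isProbabilityMeasure_of_map Prod.fst

/-! ### Admissible plans, in displacement form -/

structure Adm {d : ℕ} (p r : ℝ) (μ : Measure (Ed d)) (γ : Measure (Ed d × Ed d)) : Prop where
  prob : IsProbabilityMeasure γ
  fst : γ.map Prod.fst = μ
  cost : eLpNorm (fun q : Ed d × Ed d => q.2) (ENNReal.ofReal p) γ ≤ ENNReal.ofReal r

lemma adm_triv {d : ℕ} {p r : ℝ} {μ : Measure (Ed d)} (hμ : MemPp p μ) :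
    Adm p r μ (μ.map fun x => (x, 0)) := by
  have := hμ.1
  refine ⟨Measure.isProbabilityMeasure_map (by fun_prop), ?_, ?_⟩
  · rw [Measure.map_map (by fun_prop) (by fun_prop)]
    exact Measure.map_id
  · rw [eLpNorm_map_measure (by fun_prop) (by fun_prop)]
    have : ((fun q : Ed d × Ed d => q.2) ∘ fun x : Ed d => (x, 0)) = fun _ => 0 := rfl
    rw [this]
    simp

lemma Adm.eLp_fst {d : ℕ} {p r : ℝ} (hp : 1 < p) {μ : Measure (Ed d)} (hμ : MemPp p μ)
    {γ : Measure (Ed d × Ed d)} (h : Adm p r μ γ) :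
    eLpNorm (fun q : Ed d × Ed d => q.1) (ENNReal.ofReal p) γ < ∞ := by
  have h1 := eLpNorm_map_measure (μ := γ) (f := Prod.fst) (p := ENNReal.ofReal p)
      (g := fun x : Ed d => x) (by fun_prop) (by fun_prop)
  rw [h.fst] at h1
  have e1 := hμ.eLp hp
  rw [h1] at e1
  exact e1

lemma Adm.toBall {d : ℕ} {p r : ℝ} (hp : 1 < p) (hr : 0 ≤ r) {μ : Measure (Ed d)}
    (hμ : MemPp p μ) {γ : Measure (Ed d × Ed d)} (h : Adm p r μ γ) :
    MemPp p (γ.map fun q => q.1 + q.2) ∧ Wp p μ (γ.map fun q => q.1 + q.2) ≤ r := by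
  have := h.prob
  refine ⟨⟨Measure.isProbabilityMeasure_map (by fun_prop), ?_⟩, ?_⟩
  · rw [moment_iff hp, eLpNorm_map_measure (by fun_prop) (by fun_prop)]
    refine lt_of_le_of_lt (eLpNorm_add_le (f := fun q : Ed d × Ed d => q.1)
      (g := fun q : Ed d × Ed d => q.2) (by fun_prop) (by fun_prop) (one_le_ofReal hp)) ?_
    exact ENNReal.add_lt_top.2 ⟨h.eLp_fst hp hμ, h.cost.trans_lt ENNReal.ofReal_lt_top⟩
  · rw [Wp_eq hp]
    refine ENNReal.toReal_le_of_le_ofReal hr ?_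
    have hc : IsCoupling (γ.map fun q => (q.1, q.1 + q.2)) μ (γ.map fun q => q.1 + q.2) := by
      constructor
      · rw [Measure.map_map (by fun_prop) (by fun_prop), ← h.fst]
        rfl
      · rw [Measure.map_map (by fun_prop) (by fun_prop)]
        rfl
    refine le_trans (iInf₂_le (γ.map fun q => (q.1, q.1 + q.2)) hc) ?_
    rw [eLpNorm_map_measure (by fun_prop) (by fun_prop)]
    refine le_trans (le_of_eq ?_) h.cost
    congr 1
    ext1 q
    simp

/-- every measure in the Wasserstein ball is nearly represented by an admissible plan -/
lemma exists_adm {d : ℕ} {p r : ℝ} (hp : 1 < p) (hr : 0 ≤ r) {μ ν : Measure (Ed d)}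
    (hμ : MemPp p μ) (hν : MemPp p ν) (hW : Wp p μ ν ≤ r) {f : Ed d → ℝ} (hf : IsC0 f)
    {ε : ℝ} (hε : 0 < ε) (x : Ed d) :
    ∃ γ, Adm p r μ γ ∧ ∫ y, f (x + y) ∂ν ≤ ∫ q, f (x + (q.1 + q.2)) ∂γ + ε := by
  obtain ⟨C, hC, hCf⟩ := hf.est (half_pos hε)
  set η := ε / 2 / (C + 1) with hη
  have hη0 : 0 < η := by positivity
  obtain ⟨γ, hγp, hγc, hγ⟩ := exists_coupling hp hμ hν (lt_of_le_of_lt hW (lt_add_of_pos_right r hη0))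
  set l := r / (r + η) with hl
  have hl0 : 0 ≤ l := by positivity
  have hl1 : (1 - l) * (r + η) = η := by
    rw [hl]; field_simp; ring
  have hl1' : 0 ≤ 1 - l := by
    by_contra hcon
    have : (1 - l) * (r + η) < 0 := mul_neg_of_neg_of_pos (not_le.1 hcon) (by positivity)
    linarith
  have hlr : l * (r + η) = r := by
    rw [hl]; field_simp
  refine ⟨γ.map fun q => (q.1, l • (q.2 - q.1)), ⟨Measure.isProbabilityMeasure_map (by fun_prop),
    ?_, ?_⟩, ?_⟩
  · rw [Measure.map_map (by fun_prop) (by fun_prop), ← hγc.1]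
    rfl
  · rw [eLpNorm_map_measure (by fun_prop) (by fun_prop)]
    have : ((fun q : Ed d × Ed d => q.2) ∘ fun q : Ed d × Ed d => (q.1, l • (q.2 - q.1)))
      = l • fun q : Ed d × Ed d => q.2 - q.1 := rfl
    rw [this, eLpNorm_const_smul, ← hlr, ENNReal.ofReal_mul hl0, Real.enorm_of_nonneg hl0]
    gcongr
  · have hfc := hf.1
    have hm := hfc.measurable
    rw [integral_map (by fun_prop) (by fun_prop), ← hγc.2, integral_map (by fun_prop) (by fun_prop)]
    obtain ⟨hi, hmean⟩ := mean_le hp γ (D := fun q => q.2 - q.1) (by fun_prop) (by positivity) hγ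
    have i1 : Integrable (fun q : Ed d × Ed d => f (x + q.2)) γ := hf.integrable γ (by fun_prop)
    have i2 : Integrable (fun q : Ed d × Ed d => f (x + (q.1 + l • (q.2 - q.1)))) γ :=
      hf.integrable γ (by fun_prop)
    have i3 : Integrable (fun q : Ed d × Ed d => ε / 2 + C * ((1 - l) * ‖q.2 - q.1‖)) γ :=
      (integrable_const _).add ((hi.norm.const_mul _).const_mul _)
    have key : ∫ q, f (x + q.2) ∂γ - ∫ q, f (x + (q.1 + l • (q.2 - q.1))) ∂γ
        ≤ ∫ q, (ε / 2 + C * ((1 - l) * ‖q.2 - q.1‖)) ∂γ := by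
      rw [← integral_sub i1 i2]
      refine integral_mono (i1.sub i2) i3 fun q => ?_
      have := (le_abs_self _).trans (hCf (x + q.2) (x + (q.1 + l • (q.2 - q.1))))
      have e : x + q.2 - (x + (q.1 + l • (q.2 - q.1))) = (1 - l) • (q.2 - q.1) := by
        module
      rw [e, norm_smul, Real.norm_of_nonneg hl1'] at this
      exact this
    rw [integral_add (integrable_const _) ((hi.norm.const_mul _).const_mul _), integral_const_mul,
      integral_const_mul] at key
    simp only [integral_const, probReal_univ, one_smul] at key
    have h4 : C * ((1 - l) * ∫ q, ‖q.2 - q.1‖ ∂γ) ≤ ε / 2 := by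
      have : (1 - l) * ∫ q, ‖q.2 - q.1‖ ∂γ ≤ η := by
        rw [← hl1]
        exact mul_le_mul_of_nonneg_left hmean hl1'
      calc _ ≤ C * η := mul_le_mul_of_nonneg_left this hC
        _ ≤ (C + 1) * η := by nlinarith
        _ = ε / 2 := by rw [hη]; field_simp
    simp only at key ⊢
    linarith

/-! ### The one-step operator -/

lemma Wp_self_le {d : ℕ} {p r : ℝ} (hp : 1 < p) (hr : 0 ≤ r) {μ : Measure (Ed d)}
    (hμ : MemPp p μ) : Wp p μ μ ≤ r := by
  have h := ((adm_triv (r := r) hμ).toBall hp hr hμ).2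
  rw [Measure.map_map (by fun_prop) (by fun_prop)] at h
  have e : ((fun q : Ed d × Ed d => q.1 + q.2) ∘ fun x : Ed d => (x, (0 : Ed d))) = id := by
    ext1 x; simp
  rwa [e, Measure.map_id] at h

lemma le_SopD {d : ℕ} {p δ t : ℝ} {μ ν : Measure (Ed d)} (hν : MemPp p ν)
    (hW : Wp p μ ν ≤ δ * t) {f : Ed d → ℝ} (hf : IsC0 f) (x : Ed d) :
    ∫ y, f (x + y) ∂ν ≤ SopD p δ μ t f x := by
  obtain ⟨M, hM0, hM⟩ := hf.bdd
  refine le_csSup ⟨M, ?_⟩ ⟨ν, hν, hW, rfl⟩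
  rintro r ⟨ν', hν', -, rfl⟩
  have := hν'.1
  have h : ∫ y, f (x + y) ∂ν' ≤ ∫ y, M ∂ν' :=
    integral_mono (hf.integrable ν' (by fun_prop)) (integrable_const _)
      fun y => (le_abs_self _).trans (hM _)
  simpa using h

lemma SopD_le {d : ℕ} {p δ t : ℝ} (hp : 1 < p) (hr : 0 ≤ δ * t) {μ : Measure (Ed d)}
    (hμ : MemPp p μ) {f : Ed d → ℝ} {x : Ed d} {a : ℝ}
    (h : ∀ ν, MemPp p ν → Wp p μ ν ≤ δ * t → ∫ y, f (x + y) ∂ν ≤ a) : SopD p δ μ t f x ≤ a := by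
  refine csSup_le ⟨_, μ, hμ, Wp_self_le hp hr hμ, rfl⟩ ?_
  rintro r ⟨ν', hν', hW, rfl⟩
  exact h _ hν' hW

lemma adm_le_SopD {d : ℕ} {p δ t : ℝ} (hp : 1 < p) (hr : 0 ≤ δ * t) {μ : Measure (Ed d)}
    (hμ : MemPp p μ) {f : Ed d → ℝ} (hf : IsC0 f) (x : Ed d) {γ : Measure (Ed d × Ed d)}
    (h : Adm p (δ * t) μ γ) :
    ∫ q, f (x + (q.1 + q.2)) ∂γ ≤ SopD p δ μ t f x := by
  obtain ⟨h1, h2⟩ := h.toBall hp hr hμ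
  have h3 := le_SopD h1 h2 hf x
  have hfc := hf.1
  rwa [integral_map (by fun_prop) (by fun_prop)] at h3

lemma exists_adm_SopD {d : ℕ} {p δ t : ℝ} (hp : 1 < p) (hr : 0 ≤ δ * t) {μ : Measure (Ed d)}
    (hμ : MemPp p μ) {f : Ed d → ℝ} (hf : IsC0 f) (x : Ed d) {ε : ℝ} (hε : 0 < ε) :
    ∃ γ, Adm p (δ * t) μ γ ∧ SopD p δ μ t f x ≤ ∫ q, f (x + (q.1 + q.2)) ∂γ + ε := by
  by_contra! hcon
  have : SopD p δ μ t f x ≤ SopD p δ μ t f x - ε / 2 := by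
    refine SopD_le hp hr hμ fun ν hν hW => ?_
    obtain ⟨γ, hγ, h⟩ := exists_adm hp hr hμ hν hW hf (half_pos hε) x
    linarith [hcon γ hγ]
  linarith

lemma SopD_abs {d : ℕ} {p δ t : ℝ} (hp : 1 < p) (hr : 0 ≤ δ * t) {μ : Measure (Ed d)}
    (hμ : MemPp p μ) {f : Ed d → ℝ} (hf : IsC0 f) (x : Ed d) {c b : ℝ}
    (h : ∀ γ, Adm p (δ * t) μ γ → |∫ q, f (x + (q.1 + q.2)) ∂γ - c| ≤ b) :
    |SopD p δ μ t f x - c| ≤ b := by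
  rw [abs_le]
  constructor
  · have h1 := adm_le_SopD hp hr hμ hf x (adm_triv hμ)
    have h2 := (abs_le.1 (h _ (adm_triv hμ))).1
    linarith
  · refine le_of_forall_pos_le_add fun ε hε => ?_
    obtain ⟨γ, hγ, h1⟩ := exists_adm_SopD hp hr hμ hf x hε
    linarith [(abs_le.1 (h _ hγ)).2]

/-- mean bound for admissible plans -/
lemma Adm.mean {d : ℕ} {p r m : ℝ} (hp : 1 < p) (hr : 0 ≤ r) {μ : Measure (Ed d)}
    {γ : Measure (Ed d × Ed d)} (h : Adm p r μ γ) (hm : 0 ≤ m)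
    (hμm : eLpNorm (fun x : Ed d => x) (ENNReal.ofReal p) μ ≤ ENNReal.ofReal m) :
    Integrable (fun q : Ed d × Ed d => q.1 + q.2) γ ∧ ∫ q, ‖q.1 + q.2‖ ∂γ ≤ m + r := by
  have := h.prob
  refine mean_le hp γ (by fun_prop) (by positivity) ?_
  refine (eLpNorm_add_le (f := fun q : Ed d × Ed d => q.1)
      (g := fun q : Ed d × Ed d => q.2) (by fun_prop) (by fun_prop) (one_le_ofReal hp)).trans ?_
  rw [ENNReal.ofReal_add hm hr]
  refine add_le_add ?_ h.cost
  have h1 := eLpNorm_map_measure (μ := γ) (f := Prod.fst) (p := ENNReal.ofReal p)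
      (g := fun x : Ed d => x) (by fun_prop) (by fun_prop)
  rw [h.fst] at h1
  rwa [h1] at hμm

/-- A pointwise affine bound yields a bound for the operator. -/
lemma SopD_affine {d : ℕ} {p δ t m : ℝ} (hp : 1 < p) (hr : 0 ≤ δ * t) {μ : Measure (Ed d)}
    (hμ : MemPp p μ) (hm : 0 ≤ m)
    (hμm : eLpNorm (fun x : Ed d => x) (ENNReal.ofReal p) μ ≤ ENNReal.ofReal m)
    {f : Ed d → ℝ} (hf : IsC0 f) (x : Ed d) {c ε C : ℝ} (hC : 0 ≤ C)
    (h : ∀ y, |f (x + y) - c| ≤ ε + C * ‖y‖) :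
    |SopD p δ μ t f x - c| ≤ ε + C * (m + δ * t) := by
  refine SopD_abs hp hr hμ hf x fun γ hγ => ?_
  have := hγ.prob
  obtain ⟨hi, hmean⟩ := hγ.mean hp hr hm hμm
  have i1 : Integrable (fun q : Ed d × Ed d => f (x + (q.1 + q.2))) γ :=
    hf.integrable γ (by fun_prop)
  have e : ∫ q, f (x + (q.1 + q.2)) ∂γ - c = ∫ q, (f (x + (q.1 + q.2)) - c) ∂γ := by
    rw [integral_sub i1 (integrable_const _)]; simp
  rw [e]
  refine abs_integral_le_integral_abs.trans ?_
  have h2 : ∫ q, |f (x + (q.1 + q.2)) - c| ∂γ ≤ ∫ q, (ε + C * ‖q.1 + q.2‖) ∂γ :=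
    integral_mono (i1.sub (integrable_const _)).abs
      ((integrable_const _).add (hi.norm.const_mul _)) fun q => h _
  rw [integral_add (integrable_const _) (hi.norm.const_mul _), integral_const_mul] at h2
  simp only [integral_const, probReal_univ, one_smul] at h2
  have := mul_le_mul_of_nonneg_left hmean hC
  linarith

/-! ### Nice operators -/

structure Nice {d : ℕ} (A : (Ed d → ℝ) → (Ed d → ℝ)) : Prop where
  c0 : ∀ f, IsC0 f → IsC0 (A f)
  ctr : ∀ f g, IsC0 f → IsC0 g → ∀ c, (∀ x, f x ≤ g x + c) → ∀ x, A f x ≤ A g x + c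
  sub : ∀ f g, IsC0 f → IsC0 g → ∀ x, A (fun y => f y + g y) x ≤ A f x + A g x
  hom : ∀ f, IsC0 f → ∀ l, 0 ≤ l → ∀ x, A (fun y => l * f y) x = l * A f x
  mod : ∀ f, IsC0 f → ∀ η ε : ℝ, (∀ a b, dist a b < η → |f a - f b| ≤ ε) →
    ∀ a b, dist a b < η → |A f a - A f b| ≤ ε

lemma Nice.mono {d : ℕ} {A : (Ed d → ℝ) → (Ed d → ℝ)} (hA : Nice A) {f g : Ed d → ℝ}
    (hf : IsC0 f) (hg : IsC0 g) (h : ∀ x, f x ≤ g x) (x : Ed d) : A f x ≤ A g x := by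
  simpa using hA.ctr f g hf hg 0 (by simpa using h) x

lemma Nice.id {d : ℕ} : Nice (d := d) id :=
  ⟨fun _ h => h, fun _ _ _ _ _ h => h, fun _ _ _ _ _ => le_rfl, fun _ _ _ _ _ => rfl,
    fun _ _ _ _ h => h⟩

lemma Nice.comp {d : ℕ} {A B : (Ed d → ℝ) → (Ed d → ℝ)} (hA : Nice A) (hB : Nice B) :
    Nice (fun f => A (B f)) := by
  refine ⟨fun f hf => hA.c0 _ (hB.c0 _ hf), fun f g hf hg c h => ?_, fun f g hf hg x => ?_,
    fun f hf l hl x => ?_, fun f hf η ε h => ?_⟩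
  · exact hA.ctr _ _ (hB.c0 _ hf) (hB.c0 _ hg) c (hB.ctr f g hf hg c h)
  · refine (hA.mono (hB.c0 _ (hf.add hg)) ((hB.c0 _ hf).add (hB.c0 _ hg))
      (hB.sub f g hf hg) x).trans ?_
    exact hA.sub _ _ (hB.c0 _ hf) (hB.c0 _ hg) x
  · have : B (fun y => l * f y) = fun y => l * B f y := funext (hB.hom f hf l hl)
    simp only [this]
    exact hA.hom _ (hB.c0 _ hf) l hl x
  · exact hA.mod _ (hB.c0 _ hf) η ε (hB.mod f hf η ε h)

lemma Nice.iterate {d : ℕ} {A : (Ed d → ℝ) → (Ed d → ℝ)} (hA : Nice A) (k : ℕ) :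
    Nice (A^[k]) := by
  induction k with
  | zero => exact Nice.id
  | succ k ih =>
    rw [Function.iterate_succ]
    exact ih.comp hA

lemma SopD_tendsto {d : ℕ} {p δ t : ℝ} (hp : 1 < p) (hr : 0 ≤ δ * t) {μ : Measure (Ed d)}
    (hμ : MemPp p μ) {f : Ed d → ℝ} (hf : IsC0 f) :
    Tendsto (SopD p δ μ t f) (cocompact (Ed d)) (𝓝 0) := by
  obtain ⟨M, hM0, hM⟩ := hf.bdd
  set m := (eLpNorm (fun x : Ed d => x) (ENNReal.ofReal p) μ).toReal with hm
  have hm0 : 0 ≤ m := ENNReal.toReal_nonneg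
  have hμm : eLpNorm (fun x : Ed d => x) (ENNReal.ofReal p) μ ≤ ENNReal.ofReal m := by
    rw [hm, ENNReal.ofReal_toReal (hμ.eLp hp).ne]
  rw [Metric.tendsto_nhds]
  intro ε hε
  have h1 : ∀ᶠ z in cocompact (Ed d), |f z| < ε / 3 := by
    have := Metric.tendsto_nhds.1 hf.2 (ε / 3) (by positivity)
    simpa [Real.dist_eq] using this
  rw [← Metric.cobounded_eq_cocompact, hasBasis_cobounded_norm.eventually_iff] at h1
  obtain ⟨R0, -, hR0⟩ := h1
  set R := M * (m + δ * t) / (ε / 3) + 1 with hR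
  have hRpos : 0 < R := by positivity
  filter_upwards [(tendsto_norm_cocompact_atTop (E := Ed d)).eventually_ge_atTop (R0 + R)] with x hx
  have h2 := SopD_affine hp hr hμ hm0 hμm hf x (c := 0) (ε := ε / 3) (C := M / R) (by positivity)
    (fun y => by
      rw [sub_zero]
      by_cases hy : R ≤ ‖y‖
      · have : M ≤ M / R * ‖y‖ := by
          rw [div_mul_eq_mul_div, le_div_iff₀ hRpos]
          exact mul_le_mul_of_nonneg_left hy hM0
        linarith [hM (x + y)]
      · have hxy : x + y ∈ {x : Ed d | R0 ≤ ‖x‖} := by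
          have := norm_sub_le (x + y) y
          rw [add_sub_cancel_right] at this
          simp only [Set.mem_ofPred_eq]
          linarith
        have := hR0 hxy
        have h3 : 0 ≤ M / R * ‖y‖ := by positivity
        linarith)
  rw [Real.dist_eq]
  have h4 : M / R * (m + δ * t) ≤ ε / 3 := by
    have e : ε / 3 * R = M * (m + δ * t) + ε / 3 := by rw [hR]; field_simp
    rw [div_mul_eq_mul_div, div_le_iff₀ hRpos, e]
    linarith
  linarith

lemma SopD_mod {d : ℕ} {p δ t : ℝ} (hp : 1 < p) (hr : 0 ≤ δ * t) {μ : Measure (Ed d)}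
    (hμ : MemPp p μ) {f : Ed d → ℝ} (hf : IsC0 f) (η ε : ℝ)
    (h : ∀ a b, dist a b < η → |f a - f b| ≤ ε) (a b : Ed d) (hab : dist a b < η) :
    |SopD p δ μ t f a - SopD p δ μ t f b| ≤ ε := by
  have key : ∀ a b, dist a b < η → SopD p δ μ t f a ≤ SopD p δ μ t f b + ε := by
    intro a b hab
    refine SopD_le hp hr hμ fun ν hν hW => ?_
    have := hν.1
    have h1 := le_SopD hν hW hf b
    have h2 : ∫ y, f (a + y) ∂ν ≤ ∫ y, (f (b + y) + ε) ∂ν := by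
      refine integral_mono (hf.integrable ν (by fun_prop))
        ((hf.integrable ν (by fun_prop)).add (integrable_const _)) fun y => ?_
      have := (abs_le.1 (h (a + y) (b + y) (by simpa using hab))).2
      simp only
      linarith
    rw [integral_add (hf.integrable ν (by fun_prop)) (integrable_const _)] at h2
    simp only [integral_const, probReal_univ, one_smul] at h2
    linarith
  rw [abs_le]
  have h1 := key a b hab
  have h2 := key b a (by rwa [dist_comm])
  constructor <;> linarith

lemma SopD_nice {d : ℕ} {p δ t : ℝ} (hp : 1 < p) (hr : 0 ≤ δ * t) {μ : Measure (Ed d)}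
    (hμ : MemPp p μ) : Nice (SopD p δ μ t) := by
  refine ⟨fun f hf => ⟨?_, SopD_tendsto hp hr hμ hf⟩, fun f g hf hg c h x => ?_,
    fun f g hf hg x => ?_, fun f hf l hl x => ?_, fun f hf η ε h => SopD_mod hp hr hμ hf η ε h⟩
  · rw [Metric.continuous_iff]
    intro b ε hε
    obtain ⟨η, hη, h⟩ := Metric.uniformContinuous_iff.1 hf.uc (ε / 2) (half_pos hε)
    refine ⟨η, hη, fun a hab => ?_⟩
    have := SopD_mod hp hr hμ hf η (ε / 2) (fun a b hab => (h hab).le) a b hab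
    rw [Real.dist_eq]
    linarith
  · refine SopD_le hp hr hμ fun ν hν hW => ?_
    have := hν.1
    have h1 := le_SopD hν hW hg x
    have h2 : ∫ y, f (x + y) ∂ν ≤ ∫ y, (g (x + y) + c) ∂ν :=
      integral_mono (hf.integrable ν (by fun_prop))
        ((hg.integrable ν (by fun_prop)).add (integrable_const _)) fun y => h _
    rw [integral_add (hg.integrable ν (by fun_prop)) (integrable_const _)] at h2
    simp only [integral_const, probReal_univ, one_smul] at h2
    linarith
  · refine SopD_le hp hr hμ fun ν hν hW => ?_
    have := hν.1
    rw [integral_add (hf.integrable ν (by fun_prop)) (hg.integrable ν (by fun_prop))]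
    exact add_le_add (le_SopD hν hW hf x) (le_SopD hν hW hg x)
  · apply le_antisymm
    · refine SopD_le hp hr hμ fun ν hν hW => ?_
      rw [integral_const_mul]
      exact mul_le_mul_of_nonneg_left (le_SopD hν hW hf x) hl
    · rcases hl.eq_or_lt with rfl | hl
      · have := le_SopD hμ (Wp_self_le hp hr hμ) (hf.smul 0) x
        simpa using this
      · rw [mul_comm, ← le_div_iff₀ hl]
        refine SopD_le hp hr hμ fun ν hν hW => ?_
        rw [le_div_iff₀ hl, mul_comm, ← integral_const_mul]
        exact le_SopD hν hW (hf.smul l) x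

/-! ### Subsemigroup property of the one-step operators -/

open ProbabilityTheory in
/-- gluing of admissible plans -/
lemma adm_glue {d : ℕ} {p r s : ℝ} (hp : 1 < p) (hr : 0 ≤ r) (hs : 0 ≤ s)
    {μ ν : Measure (Ed d)} [IsProbabilityMeasure ν]
    {γ : Measure (Ed d × Ed d)} (hγ : Adm p r μ γ)
    (κ : Kernel (Ed d × Ed d) (Ed d × Ed d)) (hκ : ∀ q, Adm p s ν (κ q)) :
    Adm p (r + s) (μ.conv ν)
      ((γ ⊗ₘ κ).map fun z => (z.1.1 + z.2.1, z.1.2 + z.2.2)) := by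
  have := hγ.prob
  have : IsMarkovKernel κ := ⟨fun q => (hκ q).prob⟩
  have hp0 : ENNReal.ofReal p ≠ 0 := by simp; linarith
  refine ⟨Measure.isProbabilityMeasure_map (by fun_prop), ?_, ?_⟩
  · rw [Measure.map_map (by fun_prop) (by fun_prop)]
    refine Measure.ext_of_lintegral _ fun F hF => ?_
    rw [lintegral_map hF (by fun_prop), Measure.lintegral_compProd (by fun_prop),
      Measure.lintegral_conv hF, ← hγ.fst, lintegral_map (by fun_prop) (by fun_prop)]
    refine lintegral_congr fun q => ?_
    rw [← (hκ q).fst, lintegral_map (by fun_prop) (by fun_prop)]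
    rfl
  · rw [eLpNorm_map_measure (by fun_prop) (by fun_prop)]
    refine (eLpNorm_add_le (f := fun z : (Ed d × Ed d) × (Ed d × Ed d) => z.1.2)
      (g := fun z : (Ed d × Ed d) × (Ed d × Ed d) => z.2.2) (by fun_prop) (by fun_prop)
      (one_le_ofReal hp)).trans ?_
    rw [ENNReal.ofReal_add hr hs]
    refine add_le_add ?_ ?_
    · have h1 := eLpNorm_map_measure (μ := γ ⊗ₘ κ) (f := Prod.fst) (p := ENNReal.ofReal p)
        (g := fun x : Ed d × Ed d => x.2) (by fun_prop) (by fun_prop)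
      have h2 : (γ ⊗ₘ κ).map Prod.fst = γ := Measure.fst_compProd γ κ
      rw [h2] at h1
      have h3 := hγ.cost
      rwa [h1] at h3
    · have hc : ∀ q, ∫⁻ z, ‖z.2‖ₑ ^ p ∂(κ q) ≤ ENNReal.ofReal s ^ p := by
        intro q
        have := (hκ q).cost
        rw [← cost_eq hp, one_div, ENNReal.rpow_inv_le_iff (by linarith)] at this
        exact this
      rw [← cost_eq hp, one_div, ENNReal.rpow_inv_le_iff (by linarith)]
      rw [Measure.lintegral_compProd (by fun_prop)]
      calc _ ≤ ∫⁻ q, ENNReal.ofReal s ^ p ∂γ := lintegral_mono fun q => hc q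
        _ = _ := by simp

open ProbabilityTheory in
lemma SopD_sub {d : ℕ} {p δ s t : ℝ} (hp : 1 < p) (hδ : 0 ≤ δ) (hs : 0 ≤ s) (ht : 0 ≤ t)
    {μ ν : Measure (Ed d)} (hμ : MemPp p μ) (hν : MemPp p ν) (hμν : MemPp p (μ.conv ν))
    {f : Ed d → ℝ} (hf : IsC0 f) (x : Ed d) :
    SopD p δ μ s (SopD p δ ν t f) x ≤ SopD p δ (μ.conv ν) (s + t) f x := by
  have hr1 : 0 ≤ δ * s := by positivity
  have hr2 : 0 ≤ δ * t := by positivity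
  have := hν.1
  set g := SopD p δ ν t f with hg
  have hgC : IsC0 g := (SopD_nice hp hr2 hν).c0 f hf
  refine le_of_forall_pos_le_add fun ε' hε' => ?_
  set ε := ε' / 4 with hε
  have hε0 : 0 < ε := by positivity
  obtain ⟨γ, hγ, h1⟩ := exists_adm_SopD hp hr1 hμ hgC x hε0
  have := hγ.prob
  have hsel : ∀ n : ℕ, ∃ γ', Adm p (δ * t) ν γ' ∧
      g (TopologicalSpace.denseSeq (Ed d) n)
        ≤ ∫ q, f (TopologicalSpace.denseSeq (Ed d) n + (q.1 + q.2)) ∂γ' + ε := fun n =>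
    exists_adm_SopD hp hr2 hν hf _ hε0
  choose G hGA hG using hsel
  obtain ⟨η1, hη1, hu1⟩ := Metric.uniformContinuous_iff.1 hf.uc ε hε0
  obtain ⟨η2, hη2, hu2⟩ := Metric.uniformContinuous_iff.1 hgC.uc ε hε0
  have hex : ∀ z : Ed d, ∃ n, dist z (TopologicalSpace.denseSeq (Ed d) n) < min η1 η2 := fun z =>
    (TopologicalSpace.denseRange_denseSeq (Ed d)).exists_dist_lt z (lt_min hη1 hη2)
  classical
  let i : Ed d → ℕ := fun z => Nat.find (hex z)
  have hi : Measurable i := measurable_find hex fun k => by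
    exact (isOpen_lt (by fun_prop) (by fun_prop)).measurableSet
  have hi' : ∀ z, dist z (TopologicalSpace.denseSeq (Ed d) (i z)) < min η1 η2 :=
    fun z => Nat.find_spec (hex z)
  have hj : Measurable (fun q : Ed d × Ed d => i (x + (q.1 + q.2))) := hi.comp (by fun_prop)
  let κ : Kernel (Ed d × Ed d) (Ed d × Ed d) := (Kernel.ofFunOfCountable G).comap _ hj
  have hκ : ∀ q, κ q = G (i (x + (q.1 + q.2))) := fun q => rfl
  have hκA : ∀ q, Adm p (δ * t) ν (κ q) := fun q => by rw [hκ]; exact hGA _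
  have : IsMarkovKernel κ := ⟨fun q => (hκA q).prob⟩
  have hglue := adm_glue hp hr1 hr2 hγ κ hκA
  rw [← mul_add] at hglue
  have h2 := adm_le_SopD hp (by positivity) hμν hf x hglue
  have hfc := hf.1
  rw [integral_map (by fun_prop) (by fun_prop),
    Measure.integral_compProd (hf.integrable _ (by fun_prop))] at h2
  -- pointwise bound
  have hpt : ∀ q : Ed d × Ed d, g (x + (q.1 + q.2)) - 3 * ε ≤
      ∫ w, f (x + (q.1 + w.1 + (q.2 + w.2))) ∂(κ q) := by
    intro q
    have := (hκA q).prob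
    set z := x + (q.1 + q.2) with hz
    have hd := hi' z
    have a1 : g z ≤ g (TopologicalSpace.denseSeq (Ed d) (i z)) + ε := by
      have := hu2 (hd.trans_le (min_le_right _ _))
      rw [Real.dist_eq] at this
      linarith [(abs_lt.1 this).2]
    have a2 := hG (i z)
    have a3 : ∫ w, f (TopologicalSpace.denseSeq (Ed d) (i z) + (w.1 + w.2)) ∂(κ q)
        ≤ ∫ w, (f (x + (q.1 + w.1 + (q.2 + w.2))) + ε) ∂(κ q) := by
      refine integral_mono (hf.integrable _ (by fun_prop))
        ((hf.integrable _ (by fun_prop)).add (integrable_const _)) fun w => ?_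
      have e : x + (q.1 + w.1 + (q.2 + w.2)) = z + (w.1 + w.2) := by rw [hz]; abel
      simp only [e]
      have := @hu1 (z + (w.1 + w.2)) (TopologicalSpace.denseSeq (Ed d) (i z) + (w.1 + w.2))
        (by rw [dist_add_right]; exact hd.trans_le (min_le_left _ _))
      rw [Real.dist_eq] at this
      linarith [(abs_lt.1 this).1]
    rw [integral_add (hf.integrable _ (by fun_prop)) (integrable_const _)] at a3
    simp only [integral_const, probReal_univ, one_smul] at a3
    rw [hκ] at a3 ⊢
    linarith
  have ig : Integrable (fun q : Ed d × Ed d => g (x + (q.1 + q.2))) γ :=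
    hgC.integrable γ (by fun_prop)
  have h3 : ∫ q, (g (x + (q.1 + q.2)) - 3 * ε) ∂γ ≤
      ∫ q, ∫ w, f (x + (q.1 + w.1 + (q.2 + w.2))) ∂(κ q) ∂γ := by
    refine integral_mono (ig.sub (integrable_const _)) ?_ hpt
    have I : Integrable (fun z : (Ed d × Ed d) × (Ed d × Ed d) =>
      f (x + (z.1.1 + z.2.1 + (z.1.2 + z.2.2)))) (γ ⊗ₘ κ) := hf.integrable _ (by fun_prop)
    exact Integrable.integral_compProd (κ := Kernel.const Unit γ) (η := Kernel.prodMkLeft Unit κ)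
      (a := ()) I
  rw [integral_sub ig (integrable_const _)] at h3
  simp only [integral_const, probReal_univ, one_smul] at h3
  simp only at h2
  linarith

/-! ### Small time behaviour -/

lemma eLp_le_of_Wp {d : ℕ} {p : ℝ} (hp : 1 < p) {μ : Measure (Ed d)} (hμ : MemPp p μ)
    (h0 : MemPp p (Measure.dirac (0 : Ed d))) {η : ℝ} (h : Wp p μ (Measure.dirac 0) < η) :
    eLpNorm (fun x : Ed d => x) (ENNReal.ofReal p) μ ≤ ENNReal.ofReal η := by
  obtain ⟨γ, hγp, hγc, hγ⟩ := exists_coupling hp hμ h0 h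
  have h1 := eLpNorm_map_measure (μ := γ) (f := Prod.fst) (p := ENNReal.ofReal p)
      (g := fun x : Ed d => x) (by fun_prop) (by fun_prop)
  rw [hγc.1] at h1
  rw [h1]
  refine le_trans (le_of_eq ?_) hγ
  refine eLpNorm_congr_norm_ae ?_
  have h2 : ∀ᵐ y ∂(γ.map Prod.snd), y = (0 : Ed d) := by
    rw [hγc.2, ae_dirac_iff (by measurability)]
  have h3 := ae_of_ae_map (by fun_prop) h2
  filter_upwards [h3] with q hq
  simp [hq]

lemma SopD_small {d : ℕ} {p δ : ℝ} (hp : 1 < p) (hδ : 0 ≤ δ) {μ : ℝ → Measure (Ed d)}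
    (hμ : IsConvSemigroup p μ) (hμ0 : WContinuousAtZero p μ) {f : Ed d → ℝ} (hf : IsC0 f)
    {ε : ℝ} (hε : 0 < ε) :
    ∃ h0 : ℝ, 0 < h0 ∧ ∀ h, 0 ≤ h → h < h0 → ∀ x, |SopD p δ (μ h) h f x - f x| ≤ ε := by
  obtain ⟨C, hC, hCf⟩ := hf.est (half_pos hε)
  set η := ε / 4 / (C + 1) with hη
  have hη0 : 0 < η := by positivity
  have hCη : C * η ≤ ε / 4 := by
    calc C * η ≤ (C + 1) * η := by nlinarith
      _ = ε / 4 := by rw [hη]; field_simp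
  have hd : MemPp p (Measure.dirac (0 : Ed d)) := by
    rw [← hμ.1]; exact hμ.2.2 0 le_rfl
  have h1 : ∀ᶠ h in 𝓝[>] (0 : ℝ), Wp p (μ h) (Measure.dirac 0) < η :=
    (tendsto_order.1 hμ0).2 η hη0
  obtain ⟨h1', hh1, hh⟩ := mem_nhdsGT_iff_exists_Ioo_subset.1 h1
  refine ⟨min h1' (η / (δ + 1)), lt_min hh1 (by positivity), fun h hh0 hlt x => ?_⟩
  have hW : Wp p (μ h) (Measure.dirac 0) < η := by
    rcases hh0.eq_or_lt with rfl | hpos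
    · rw [hμ.1]
      exact lt_of_le_of_lt (Wp_self_le hp le_rfl hd) hη0
    · exact hh ⟨hpos, hlt.trans_le (min_le_left _ _)⟩
  have hδh : δ * h ≤ η := by
    have h3 : h ≤ η / (δ + 1) := (hlt.trans_le (min_le_right _ _)).le
    rw [le_div_iff₀ (by positivity)] at h3
    nlinarith
  have h2 := SopD_affine hp (by positivity) (hμ.2.2 h hh0) hη0.le
    (eLp_le_of_Wp hp (hμ.2.2 h hh0) hd hW) hf x (c := f x) (ε := ε / 2) (C := C) (δ := δ) (t := h)
    hC (fun y => by simpa using hCf (x + y) x)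
  have h4 : C * (η + δ * h) ≤ C * (η + η) := by gcongr
  nlinarith

/-! ### The iterated operators -/

lemma Nice.zero {d : ℕ} {A : (Ed d → ℝ) → (Ed d → ℝ)} (hA : Nice A) (x : Ed d) :
    A (fun _ => 0) x = 0 := by
  have h0 : IsC0 (fun _ : Ed d => (0 : ℝ)) := ⟨continuous_const, tendsto_const_nhds⟩
  simpa using hA.hom _ h0 0 le_rfl x

lemma Nice.close {d : ℕ} {A : (Ed d → ℝ) → (Ed d → ℝ)} (hA : Nice A) {f g : Ed d → ℝ}
    (hf : IsC0 f) (hg : IsC0 g) {c : ℝ} (h : ∀ x, |f x - g x| ≤ c) (x : Ed d) :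
    |A f x - A g x| ≤ c := by
  have h1 := hA.ctr f g hf hg c (fun x => by linarith [(abs_le.1 (h x)).2]) x
  have h2 := hA.ctr g f hg hf c (fun x => by linarith [(abs_le.1 (h x)).1]) x
  rw [abs_le]
  constructor <;> linarith

lemma Nice.neg_le {d : ℕ} {A : (Ed d → ℝ) → (Ed d → ℝ)} (hA : Nice A) {f : Ed d → ℝ}
    (hf : IsC0 f) (x : Ed d) : -A (fun y => (-1) * f y) x ≤ A f x := by
  have h := hA.sub f _ hf (hf.smul (-1)) x
  have e : (fun y => f y + -1 * f y) = fun _ => (0 : ℝ) := by ext y; ring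
  rw [e, hA.zero] at h
  linarith

lemma iter_two_le {d : ℕ} {A B : (Ed d → ℝ) → (Ed d → ℝ)} (hA : Nice A) (hB : Nice B)
    (hBA : ∀ g, IsC0 g → ∀ x, B (B g) x ≤ A g x) (k : ℕ) (g : Ed d → ℝ) (hg : IsC0 g) (x : Ed d) :
    B^[2 * k] g x ≤ A^[k] g x := by
  induction k generalizing g with
  | zero => simp
  | succ k ih =>
    have e : B^[2 * (k + 1)] g = B^[2 * k] (B (B g)) := rfl
    rw [e, Function.iterate_succ_apply]
    refine le_trans ?_ (ih (A g) (hA.c0 _ hg))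
    exact (hB.iterate _).mono (hB.c0 _ (hB.c0 _ hg)) (hA.c0 _ hg) (hBA g hg) x

lemma rem_nonneg (n : ℕ) {t : ℝ} (ht : 0 ≤ t) :
    0 ≤ t - ⌊(2:ℝ)^n * t⌋₊ * ((2:ℝ)^n)⁻¹ := by
  have h := Nat.floor_le (a := (2:ℝ)^n * t) (by positivity)
  have h2 : (0:ℝ) < 2 ^ n := by positivity
  rw [sub_nonneg, ← div_eq_mul_inv, div_le_iff₀ h2]
  linarith

lemma rem_lt (n : ℕ) (t : ℝ) :
    t - ⌊(2:ℝ)^n * t⌋₊ * ((2:ℝ)^n)⁻¹ < ((2:ℝ)^n)⁻¹ := by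
  have h := Nat.lt_floor_add_one ((2:ℝ)^n * t)
  have h2 : (0:ℝ) < 2 ^ n := by positivity
  have h3 : t < (⌊(2:ℝ)^n * t⌋₊ + 1) * ((2:ℝ)^n)⁻¹ := by
    rw [← div_eq_mul_inv, lt_div_iff₀ h2]
    linarith
  linarith

section fixed
variable {d : ℕ} {p δ : ℝ} {μ : ℝ → Measure (Ed d)}

lemma S_nice (hp : 1 < p) (hδ : 0 ≤ δ) (hμ : IsConvSemigroup p μ) {t : ℝ} (ht : 0 ≤ t) :
    Nice (SopD p δ (μ t) t) := SopD_nice hp (by positivity) (hμ.2.2 t ht)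

lemma S_sub (hp : 1 < p) (hδ : 0 ≤ δ) (hμ : IsConvSemigroup p μ) {s t : ℝ} (hs : 0 ≤ s)
    (ht : 0 ≤ t) {f : Ed d → ℝ} (hf : IsC0 f) (x : Ed d) :
    SopD p δ (μ s) s (SopD p δ (μ t) t f) x ≤ SopD p δ (μ (s + t)) (s + t) f x := by
  have h := hμ.2.2 (s + t) (by positivity)
  rw [hμ.2.1 s t hs ht] at h ⊢
  exact SopD_sub hp hδ hs ht (hμ.2.2 s hs) (hμ.2.2 t ht) h hf x

lemma iter_nice (hp : 1 < p) (hδ : 0 ≤ δ) (hμ : IsConvSemigroup p μ) {t : ℝ} (ht : 0 ≤ t)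
    (n : ℕ) : Nice (SiterND p δ μ n t) := by
  have h1 : Nice (SopD p δ (μ ((2 : ℝ) ^ n)⁻¹) ((2 : ℝ) ^ n)⁻¹) := S_nice hp hδ hμ (by positivity)
  have h2 := Nice.comp (h1.iterate ⌊(2:ℝ)^n * t⌋₊) (S_nice hp hδ hμ (rem_nonneg n ht))
  exact h2

lemma iter_succ_le (hp : 1 < p) (hδ : 0 ≤ δ) (hμ : IsConvSemigroup p μ) {t : ℝ} (ht : 0 ≤ t)
    (n : ℕ) {f : Ed d → ℝ} (hf : IsC0 f) (x : Ed d) :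
    SiterND p δ μ (n + 1) t f x ≤ SiterND p δ μ n t f x := by
  have hr' := rem_nonneg (n + 1) ht
  have hr := rem_nonneg n ht
  unfold SiterND
  set h := ((2:ℝ) ^ (n + 1))⁻¹ with hh
  have hh0 : 0 < h := by positivity
  have h2 : ((2:ℝ) ^ n)⁻¹ = h + h := by
    rw [hh, pow_succ]; field_simp; norm_num
  rw [h2] at hr ⊢
  set k := ⌊(2:ℝ) ^ n * t⌋₊ with hk
  have hB : Nice (SopD p δ (μ h) h) := S_nice hp hδ hμ hh0.le
  have hA : Nice (SopD p δ (μ (h + h)) (h + h)) := S_nice hp hδ hμ (by positivity)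
  have hBA : ∀ g, IsC0 g → ∀ x, SopD p δ (μ h) h (SopD p δ (μ h) h g) x
    ≤ SopD p δ (μ (h + h)) (h + h) g x := fun g hg x => S_sub hp hδ hμ hh0.le hh0.le hg x
  have hpos : (0:ℝ) ≤ 2 ^ n * t := by positivity
  have e : (2:ℝ) ^ (n + 1) * t = 2 * (2 ^ n * t) := by ring
  have hk1 := Nat.floor_le hpos
  have hk2 := Nat.lt_floor_add_one ((2:ℝ) ^ n * t)
  rw [← hk] at hk1 hk2
  have hcase : ⌊(2:ℝ) ^ (n + 1) * t⌋₊ = 2 * k ∨ ⌊(2:ℝ) ^ (n + 1) * t⌋₊ = 2 * k + 1 := by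
    have a1 : 2 * k ≤ ⌊(2:ℝ) ^ (n + 1) * t⌋₊ := Nat.le_floor (by push_cast; linarith)
    have a2 : ⌊(2:ℝ) ^ (n + 1) * t⌋₊ < 2 * k + 2 := by
      rw [Nat.floor_lt (by positivity)]; push_cast; linarith
    omega
  have hrC := (S_nice (d := d) hp hδ hμ hr).c0 f hf
  rcases hcase with hc | hc
  · rw [hc]
    have er : t - ((2 * k : ℕ) : ℝ) * h = t - k * (h + h) := by push_cast; ring
    rw [er]
    exact iter_two_le hA hB hBA k _ hrC x
  · rw [hc] at hr' ⊢
    rw [Function.iterate_succ_apply]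
    refine le_trans ?_ (iter_two_le hA hB hBA k _ hrC x)
    have hC' := (S_nice (d := d) hp hδ hμ hr').c0 f hf
    refine (hB.iterate _).mono (hB.c0 _ hC') hrC (fun y => ?_) x
    have h3 := S_sub hp hδ hμ hh0.le hr' hf y
    have er : h + (t - ((2 * k + 1 : ℕ) : ℝ) * h) = t - k * (h + h) := by push_cast; ring
    rwa [er] at h3

lemma iter_anti (hp : 1 < p) (hδ : 0 ≤ δ) (hμ : IsConvSemigroup p μ) {t : ℝ} (ht : 0 ≤ t)
    {f : Ed d → ℝ} (hf : IsC0 f) (x : Ed d) : Antitone fun n => SiterND p δ μ n t f x :=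
  antitone_nat_of_succ_le fun n => iter_succ_le hp hδ hμ ht n hf x

lemma iter_lower (hp : 1 < p) (hδ : 0 ≤ δ) (hμ : IsConvSemigroup p μ) {t : ℝ} (ht : 0 ≤ t)
    {f : Ed d → ℝ} (hf : IsC0 f) (x : Ed d) (n : ℕ) :
    -SiterND p δ μ 0 t (fun y => (-1) * f y) x ≤ SiterND p δ μ n t f x := by
  have h1 := (iter_nice hp hδ hμ ht n).neg_le hf x
  have h2 := iter_anti hp hδ hμ ht (hf.smul (-1)) x (Nat.zero_le n)
  simp only at h2
  linarith

lemma iter_bdd (hp : 1 < p) (hδ : 0 ≤ δ) (hμ : IsConvSemigroup p μ) {t : ℝ} (ht : 0 ≤ t)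
    {f : Ed d → ℝ} (hf : IsC0 f) (x : Ed d) :
    BddBelow (Set.range fun n => SiterND p δ μ n t f x) := by
  refine ⟨-SiterND p δ μ 0 t (fun y => (-1) * f y) x, ?_⟩
  rintro _ ⟨n, rfl⟩
  exact iter_lower hp hδ hμ ht hf x n

lemma iter_tendsto (hp : 1 < p) (hδ : 0 ≤ δ) (hμ : IsConvSemigroup p μ) {t : ℝ} (ht : 0 ≤ t)
    {f : Ed d → ℝ} (hf : IsC0 f) (x : Ed d) :
    Tendsto (fun n => SiterND p δ μ n t f x) atTop (𝓝 (SlimD p δ μ t f x)) :=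
  tendsto_atTop_ciInf (iter_anti hp hδ hμ ht hf x) (iter_bdd hp hδ hμ ht hf x)

lemma lim_nice (hp : 1 < p) (hδ : 0 ≤ δ) (hμ : IsConvSemigroup p μ) {t : ℝ} (ht : 0 ≤ t) :
    Nice (SlimD p δ μ t) := by
  have hN := fun n => iter_nice (d := d) hp hδ hμ ht n
  have hT := fun (f : Ed d → ℝ) (hf : IsC0 f) x => iter_tendsto hp hδ hμ ht hf x
  have hmod : ∀ f, IsC0 f → ∀ η ε : ℝ, (∀ a b, dist a b < η → |f a - f b| ≤ ε) →
    ∀ a b, dist a b < η → |SlimD p δ μ t f a - SlimD p δ μ t f b| ≤ ε := by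
    intro f hf η ε h a b hab
    refine le_of_tendsto ((hT f hf a).sub (hT f hf b)).abs (Eventually.of_forall fun n => ?_)
    exact (hN n).mod f hf η ε h a b hab
  refine ⟨fun f hf => ⟨?_, ?_⟩, fun f g hf hg c h x => ?_, fun f g hf hg x => ?_,
    fun f hf l hl x => ?_, hmod⟩
  · rw [Metric.continuous_iff]
    intro b ε hε
    obtain ⟨η, hη, h⟩ := Metric.uniformContinuous_iff.1 hf.uc (ε / 2) (half_pos hε)
    refine ⟨η, hη, fun a hab => ?_⟩
    have := hmod f hf η (ε / 2) (fun a b hab => (h hab).le) a b hab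
    rw [Real.dist_eq]
    linarith
  · refine tendsto_of_tendsto_of_tendsto_of_le_of_le
      (g := fun x => -SiterND p δ μ 0 t (fun y => (-1) * f y) x) (h := SiterND p δ μ 0 t f) ?_
      ((hN 0).c0 f hf).2 (fun x => ?_) (fun x => ?_)
    · simpa using ((hN 0).c0 _ (hf.smul (-1))).2.neg
    · exact le_ciInf fun n => iter_lower hp hδ hμ ht hf x n
    · exact ciInf_le (iter_bdd hp hδ hμ ht hf x) 0
  · exact le_of_tendsto_of_tendsto' (hT f hf x) ((hT g hg x).add_const c)
      fun n => (hN n).ctr f g hf hg c h x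
  · exact le_of_tendsto_of_tendsto' (hT _ (hf.add hg) x) ((hT f hf x).add (hT g hg x))
      fun n => (hN n).sub f g hf hg x
  · refine tendsto_nhds_unique (hT _ (hf.smul l) x) ?_
    have := (hT f hf x).const_mul l
    refine this.congr fun n => ?_
    exact ((hN n).hom f hf l hl x).symm

lemma iter_unif (hp : 1 < p) (hδ : 0 ≤ δ) (hμ : IsConvSemigroup p μ) {t : ℝ} (ht : 0 ≤ t)
    {f : Ed d → ℝ} (hf : IsC0 f) {ε : ℝ} (hε : 0 < ε) :
    ∀ᶠ n in atTop, ∀ x, |SiterND p δ μ n t f x - SlimD p δ μ t f x| ≤ ε := by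
  have hL := (lim_nice (d := d) hp hδ hμ ht).c0 f hf
  have h0 := (iter_nice (d := d) hp hδ hμ ht 0).c0 f hf
  have h1 : ∀ᶠ x in cocompact (Ed d), |SiterND p δ μ 0 t f x - SlimD p δ μ t f x| < ε := by
    have := Metric.tendsto_nhds.1 (h0.2.sub hL.2) ε hε
    simpa [Real.dist_eq] using this
  obtain ⟨K, hK, hKs⟩ := Filter.mem_cocompact.1 h1
  have hD := Antitone.tendstoUniformlyOn_of_forall_tendsto hK
    (F := fun n => SiterND p δ μ n t f) (f := SlimD p δ μ t f)
    (fun n => ((iter_nice (d := d) hp hδ hμ ht n).c0 f hf).1.continuousOn)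
    (fun x _ => iter_anti hp hδ hμ ht hf x) hL.1.continuousOn
    (fun x _ => iter_tendsto hp hδ hμ ht hf x)
  filter_upwards [Metric.tendstoUniformlyOn_iff.1 hD ε hε] with n hn x
  by_cases hx : x ∈ K
  · have := (hn x hx).le
    rwa [dist_comm, Real.dist_eq] at this
  · have h2 : |SiterND p δ μ 0 t f x - SlimD p δ μ t f x| < ε := hKs hx
    have h3 : SlimD p δ μ t f x ≤ SiterND p δ μ n t f x := ciInf_le (iter_bdd hp hδ hμ ht hf x) n
    have h4 : SiterND p δ μ n t f x ≤ SiterND p δ μ 0 t f x :=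
      iter_anti hp hδ hμ ht hf x (Nat.zero_le n)
    rw [abs_of_nonneg (by linarith)]
    linarith [le_abs_self (SiterND p δ μ 0 t f x - SlimD p δ μ t f x)]

lemma iter_near (hp : 1 < p) (hδ : 0 ≤ δ) (hμ : IsConvSemigroup p μ)
    (hμ0 : WContinuousAtZero p μ) {t : ℝ} (ht : 0 ≤ t)
    {f : Ed d → ℝ} (hf : IsC0 f) {ε : ℝ} (hε : 0 < ε) :
    ∀ᶠ n in atTop, ∀ x, |SiterND p δ μ n t f x -
      (SopD p δ (μ ((2 : ℝ) ^ n)⁻¹) ((2 : ℝ) ^ n)⁻¹)^[⌊(2:ℝ)^n * t⌋₊] f x| ≤ ε := by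
  obtain ⟨h0, hh0, h⟩ := SopD_small hp hδ hμ hμ0 hf hε
  have hlim : Tendsto (fun n : ℕ => ((2:ℝ) ^ n)⁻¹) atTop (𝓝 0) :=
    tendsto_inv_atTop_zero.comp (tendsto_pow_atTop_atTop_of_one_lt (by norm_num))
  filter_upwards [(tendsto_order.1 hlim).2 h0 hh0] with n hn x
  refine ((S_nice hp hδ hμ (by positivity)).iterate _).close
    ((S_nice hp hδ hμ (rem_nonneg n ht)).c0 _ hf) hf ?_ x
  exact h _ (rem_nonneg n ht) ((rem_lt n t).trans hn)

lemma lim_semigroup (hp : 1 < p) (hδ : 0 ≤ δ) (hμ : IsConvSemigroup p μ)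
    (hμ0 : WContinuousAtZero p μ) {s t : ℝ} (hs : 0 ≤ s) (ht : 0 ≤ t)
    {f : Ed d → ℝ} (hf : IsC0 f) (x : Ed d) :
    SlimD p δ μ t (SlimD p δ μ s f) x = SlimD p δ μ (t + s) f x := by
  have hL := (lim_nice (d := d) hp hδ hμ hs).c0 f hf
  have hts : 0 ≤ t + s := by positivity
  have key : ∀ ε : ℝ, 0 < ε →
      |SlimD p δ μ t (SlimD p δ μ s f) x - SlimD p δ μ (t + s) f x| ≤ 5 * ε := by
    intro ε hε
    refine le_of_tendsto ((iter_tendsto hp hδ hμ ht hL x).sub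
      (iter_tendsto hp hδ hμ hts hf x)).abs ?_
    obtain ⟨h0, hh0, hsm⟩ := SopD_small hp hδ hμ hμ0 hf hε
    have hlim : Tendsto (fun n : ℕ => ((2:ℝ) ^ n)⁻¹) atTop (𝓝 0) :=
      tendsto_inv_atTop_zero.comp (tendsto_pow_atTop_atTop_of_one_lt (by norm_num))
    filter_upwards [(tendsto_order.1 hlim).2 h0 hh0, iter_near hp hδ hμ hμ0 hts hf hε,
      iter_near hp hδ hμ hμ0 hs hf hε, iter_near hp hδ hμ hμ0 ht hL hε,
      iter_unif hp hδ hμ hs hf hε] with n hn h1 h2 h3 h4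
    have hA : Nice (SopD p δ (μ ((2 : ℝ) ^ n)⁻¹) ((2 : ℝ) ^ n)⁻¹) :=
      S_nice hp hδ hμ (by positivity)
    have hAf := hsm ((2 : ℝ) ^ n)⁻¹ (by positivity) hn
    generalize SopD p δ (μ ((2 : ℝ) ^ n)⁻¹) ((2 : ℝ) ^ n)⁻¹ = A at *
    have hk : ⌊(2:ℝ)^n * (t + s)⌋₊ = ⌊(2:ℝ)^n * t⌋₊ + ⌊(2:ℝ)^n * s⌋₊ ∨
        ⌊(2:ℝ)^n * (t + s)⌋₊ = ⌊(2:ℝ)^n * t⌋₊ + ⌊(2:ℝ)^n * s⌋₊ + 1 := by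
      have b1 := Nat.floor_le (a := (2:ℝ)^n * t) (by positivity)
      have b2 := Nat.floor_le (a := (2:ℝ)^n * s) (by positivity)
      have b3 := Nat.lt_floor_add_one ((2:ℝ)^n * t)
      have b4 := Nat.lt_floor_add_one ((2:ℝ)^n * s)
      have a1 : ⌊(2:ℝ)^n * t⌋₊ + ⌊(2:ℝ)^n * s⌋₊ ≤ ⌊(2:ℝ)^n * (t + s)⌋₊ :=
        Nat.le_floor (by push_cast; linarith)
      have a2 : ⌊(2:ℝ)^n * (t + s)⌋₊ < ⌊(2:ℝ)^n * t⌋₊ + ⌊(2:ℝ)^n * s⌋₊ + 2 := by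
        rw [Nat.floor_lt (by positivity)]; push_cast; linarith
      omega
    generalize ⌊(2:ℝ)^n * t⌋₊ = k at *
    generalize ⌊(2:ℝ)^n * s⌋₊ = l at *
    have h5 : |A^[⌊(2:ℝ)^n * (t + s)⌋₊] f x - A^[k] (A^[l] f) x| ≤ ε := by
      rw [← Function.iterate_add_apply]
      rcases hk with hk | hk
      · rw [hk]; simpa using hε.le
      · rw [hk, Function.iterate_succ_apply]
        exact (hA.iterate _).close (hA.c0 _ hf) hf hAf x
    have h6 : |A^[k] (A^[l] f) x - A^[k] (SlimD p δ μ s f) x| ≤ 2 * ε := by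
      refine (hA.iterate _).close ((hA.iterate _).c0 _ hf) hL (fun y => ?_) x
      have u1 := abs_le.1 (h2 y)
      have u2 := abs_le.1 (h4 y)
      rw [abs_le]
      constructor <;> linarith
    have u1 := abs_le.1 (h1 x)
    have u3 := abs_le.1 (h3 x)
    have u5 := abs_le.1 h5
    have u6 := abs_le.1 h6
    rw [abs_le]
    constructor <;> linarith
  have h0 : |SlimD p δ μ t (SlimD p δ μ s f) x - SlimD p δ μ (t + s) f x| ≤ 0 := by
    refine le_of_forall_pos_le_add fun ε hε => ?_
    have := key (ε / 5) (by positivity)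
    linarith
  exact sub_eq_zero.1 (abs_nonpos_iff.1 h0)

end fixed

/-- the nonlinear semigroup generated by the distributionally robust
random walk with Wasserstein-ball radius `δ·t`: the decreasing pointwise limit
`𝒮(t)f = lim_n 𝒮ⁿ(t)f` exists, `𝒮(t)` maps `C₀(ℝ^d)` to itself, the semigroup property
holds, and each `𝒮(t)` is sublinear, increasing, normalized and contractive. -/
theorem stmt_0 (d : ℕ) (hd : 1 ≤ d) (p : ℝ) (hp : 1 < p) (δ : ℝ) (hδ : 0 ≤ δ)
    (μ : ℝ → Measure (Ed d)) (hμ : IsConvSemigroup p μ) (hμ0 : WContinuousAtZero p μ) :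
    ∀ t : ℝ, 0 ≤ t → ∀ f : C₀(Ed d, ℝ),
      -- the decreasing pointwise limit exists
      (∀ x, Antitone fun n => SiterND p δ μ n t (⇑f) x) ∧
      (∀ x, Tendsto (fun n => SiterND p δ μ n t (⇑f) x) atTop
        (𝓝 (SlimD p δ μ t (⇑f) x))) ∧
      -- (i) `𝒮(t)` maps `C₀(ℝ^d)` to itself and `𝒮(t)(𝒮(s)f) = 𝒮(t+s)f`
      IsC0 (SlimD p δ μ t (⇑f)) ∧
      (∀ s : ℝ, 0 ≤ s → ∀ x,
        SlimD p δ μ t (SlimD p δ μ s (⇑f)) x = SlimD p δ μ (t + s) (⇑f) x) ∧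
      -- (ii) sublinearity
      (∀ g : C₀(Ed d, ℝ), ∀ x,
        SlimD p δ μ t (fun y => f y + g y) x ≤
          SlimD p δ μ t (⇑f) x + SlimD p δ μ t (⇑g) x) ∧
      (∀ l : ℝ, 0 ≤ l → ∀ x,
        SlimD p δ μ t (fun y => l * f y) x = l * SlimD p δ μ t (⇑f) x) ∧
      -- increasing
      (∀ g : C₀(Ed d, ℝ), (∀ x, f x ≤ g x) →
        ∀ x, SlimD p δ μ t (⇑f) x ≤ SlimD p δ μ t (⇑g) x) ∧
      -- maps zero to zero
      (∀ x, SlimD p δ μ t (fun _ => (0:ℝ)) x = 0) ∧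
      -- contractivity
      (∀ g : C₀(Ed d, ℝ), ∀ x,
        |SlimD p δ μ t (⇑f) x - SlimD p δ μ t (⇑g) x| ≤ ‖f - g‖) := by

  intro t ht f
  have hf := isC0_coe f
  have hN := lim_nice (d := d) hp hδ hμ ht
  refine ⟨fun x => iter_anti hp hδ hμ ht hf x, fun x => iter_tendsto hp hδ hμ ht hf x, hN.c0 _ hf,
    fun s hs x => lim_semigroup hp hδ hμ hμ0 hs ht hf x,
    fun g x => hN.sub _ _ hf (isC0_coe g) x, fun l hl x => hN.hom _ hf l hl x,
    fun g h x => hN.mono hf (isC0_coe g) h x, fun x => hN.zero x, fun g x => ?_⟩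
  refine hN.close hf (isC0_coe g) (fun y => ?_) x
  have := (f - g).toBCF.norm_coe_le_norm y
  rw [ZeroAtInftyContinuousMap.norm_toBCF_eq_norm] at this
  exact this
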